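/- Let ξ = e^{2πi/3}, Γ₁ = ℤ[ξ] the hexagonal lattice, and Γ₂ = ⟨u, v⟩_ℤ for ℝ-linearly independent u, v ∈ ℤ[ξ]. If Im_h(u·conj(v)) divides each of Im_h(u²), Im_h(v²), and Im_h(uv), but divides none of N(u), N(v), and Re_h(u·conj(v)), then the point group of the color group H of the coloring of Γ₁ determined by Γ₂ has order 4 and consists of the identity, the 180°-rotation z ↦ −z, and a pair {s, −s} of reflections from the point group of ℤ[ξ] (so the color group is of type cmm); in particular complex conjugation z ↦ conj(z) belongs to H. -/

import Mathlib

open Complex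

/-- A symmetry `h` of the plane (identified with `ℂ`) is a *color symmetry* of the
coloring of `Γ₁` determined by its subgroup `Γ₂` (each coset of `Γ₂` is one color) if
there is a permutation `σ` of the colors with `c (h ℓ) = σ (c ℓ)` for all `ℓ ∈ Γ₁`. -/
def IsColorSymmetry (Γ₁ Γ₂ : AddSubgroup ℂ) (h : ℂ → ℂ) : Prop :=
  ∃ σ : Equiv.Perm (ℂ ⧸ Γ₂), ∀ ℓ ∈ Γ₁,
    (QuotientAddGroup.mk (h ℓ) : ℂ ⧸ Γ₂) = σ (QuotientAddGroup.mk ℓ)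

/-- The point group `P(H)` of the color group `H` of the coloring of `Γ₁` determined by
`Γ₂`: all isometries of the plane fixing the origin, mapping `Γ₁` onto itself, and
permuting the colors. -/
def pointColorGroup (Γ₁ Γ₂ : AddSubgroup ℂ) : Set (ℂ → ℂ) :=
  {g | Isometry g ∧ Function.Surjective g ∧ g 0 = 0 ∧
    g '' (Γ₁ : Set ℂ) = Γ₁ ∧ IsColorSymmetry Γ₁ Γ₂ g}

open Set
open scoped ComplexConjugate

/-!
For an isometry `g` fixing the origin with `g Γ₁ = Γ₁`, permuting the colors means `g Γ₂ = Γ₂`.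
The identity `Im(u v̄) w = Im(w v̄) u - Im(w ū) v` solves for the coordinates of `w` in the basis
`u, v`, so `w ∈ Γ₂` is a pair of divisibilities by `Im_h(u v̄)`. Taking `w = ū, v̄` shows that the
first three divisibilities say `conj Γ₂ ⊆ Γ₂`; taking `w = ξu, ξv` shows that the last three
together say `ξ Γ₂ ⊆ Γ₂`. Composing with conjugation reduces the determination of the point group
to its rotations `z ↦ az`. These have `a` a unit of `ℤ[ξ]`, and every unit other than `±1` has a
power equal to `ξ`, so it cannot preserve `Γ₂`.
-/

section ColorSymmetry

variable {Γ₁ Γ₂ : AddSubgroup ℂ}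

theorem IsColorSymmetry.comp {g h : ℂ → ℂ} (hg : IsColorSymmetry Γ₁ Γ₂ g)
    (hh : IsColorSymmetry Γ₁ Γ₂ h) (hmaps : MapsTo h Γ₁ Γ₁) :
    IsColorSymmetry Γ₁ Γ₂ (g ∘ h) := by
  obtain ⟨σ, hσ⟩ := hg
  obtain ⟨τ, hτ⟩ := hh
  refine ⟨τ.trans σ, fun z hz ↦ ?_⟩
  rw [Function.comp_apply, hσ _ (hmaps hz), hτ z hz, Equiv.trans_apply]

theorem comp_mem_pointColorGroup {g h : ℂ → ℂ} (hg : g ∈ pointColorGroup Γ₁ Γ₂)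
    (hh : h ∈ pointColorGroup Γ₁ Γ₂) : g ∘ h ∈ pointColorGroup Γ₁ Γ₂ := by
  obtain ⟨hg_isom, hg_surj, hg_zero, hg_image, hg_color⟩ := hg
  obtain ⟨hh_isom, hh_surj, hh_zero, hh_image, hh_color⟩ := hh
  refine ⟨hg_isom.comp hh_isom, hg_surj.comp hh_surj, ?_, ?_, hg_color.comp hh_color ?_⟩
  · rw [Function.comp_apply, hh_zero, hg_zero]
  · rw [image_comp, hh_image, hg_image]
  · exact mapsTo_iff_image_subset.2 hh_image.subset

theorem isColorSymmetry_of_map_eq {e : ℂ ≃+ ℂ} (he : Γ₂.map (e : ℂ →+ ℂ) = Γ₂) :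
    IsColorSymmetry Γ₁ Γ₂ e :=
  ⟨(QuotientAddGroup.congr Γ₂ Γ₂ e he).toEquiv, fun _ _ ↦ rfl⟩

theorem IsColorSymmetry.apply_mem_iff {g : ℂ → ℂ} (hg : IsColorSymmetry Γ₁ Γ₂ g)
    (hzero : g 0 = 0) {z : ℂ} (hz : z ∈ Γ₁) : g z ∈ Γ₂ ↔ z ∈ Γ₂ := by
  obtain ⟨σ, hσ⟩ := hg
  have hσ_zero : σ 0 = 0 := by simpa [hzero] using (hσ 0 Γ₁.zero_mem).symm
  rw [← QuotientAddGroup.eq_zero_iff, ← QuotientAddGroup.eq_zero_iff, hσ z hz,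
    ← σ.apply_eq_iff_eq (x := (z : ℂ ⧸ Γ₂)), hσ_zero]

theorem coe_mem_pointColorGroup_iff (hle : Γ₂ ≤ Γ₁) (e : ℂ ≃ₗᵢ[ℝ] ℂ) :
    ⇑e ∈ pointColorGroup Γ₁ Γ₂ ↔
      e '' (Γ₁ : Set ℂ) = Γ₁ ∧ e '' (Γ₂ : Set ℂ) = Γ₂ := by
  constructor
  · rintro ⟨-, -, -, himage, hcolor⟩
    refine ⟨himage, Subset.antisymm ?_ fun z hz ↦ ?_⟩
    · rintro _ ⟨z, hz, rfl⟩
      exact (hcolor.apply_mem_iff (map_zero e) (hle hz)).2 hz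
    · obtain ⟨w, hw, rfl⟩ := himage.superset (hle hz)
      exact ⟨w, (hcolor.apply_mem_iff (map_zero e) hw).1 hz, rfl⟩
  · rintro ⟨himage₁, himage₂⟩
    exact ⟨e.isometry, e.surjective, map_zero e, himage₁,
      isColorSymmetry_of_map_eq (e := e.toLinearEquiv.toAddEquiv) (SetLike.coe_injective himage₂)⟩

theorem coe_mem_pointColorGroup_of_involutive (hle : Γ₂ ≤ Γ₁) {e : ℂ ≃ₗᵢ[ℝ] ℂ}
    (he : Function.Involutive e) (h₁ : MapsTo e Γ₁ Γ₁) (h₂ : MapsTo e Γ₂ Γ₂) :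
    ⇑e ∈ pointColorGroup Γ₁ Γ₂ :=
  (coe_mem_pointColorGroup_iff hle e).2
    ⟨h₁.image_subset.antisymm fun z hz ↦ ⟨e z, h₁ hz, he z⟩,
      h₂.image_subset.antisymm fun z hz ↦ ⟨e z, h₂ hz, he z⟩⟩

theorem id_mem_pointColorGroup (hle : Γ₂ ≤ Γ₁) : (fun z ↦ z) ∈ pointColorGroup Γ₁ Γ₂ :=
  coe_mem_pointColorGroup_of_involutive hle (e := .refl ℝ ℂ) (fun _ ↦ rfl) (mapsTo_id _)
    (mapsTo_id _)

theorem neg_mem_pointColorGroup (hle : Γ₂ ≤ Γ₁) : (fun z ↦ -z) ∈ pointColorGroup Γ₁ Γ₂ :=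
  coe_mem_pointColorGroup_of_involutive hle (e := .neg ℝ) neg_neg
    (fun _ ↦ Γ₁.neg_mem) (fun _ ↦ Γ₂.neg_mem)

theorem exists_circle_of_mem_pointColorGroup {g : ℂ → ℂ} (hg : g ∈ pointColorGroup Γ₁ Γ₂) :
    ∃ a : Circle, g = (fun z ↦ (a : ℂ) * z) ∨ g = (fun z ↦ (a : ℂ) * conj z) := by
  obtain ⟨hisom, hsurj, hzero, -⟩ := hg
  let e : ℂ ≃ᵢ ℂ := ⟨Equiv.ofBijective g ⟨hisom.injective, hsurj⟩, hisom⟩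
  obtain ⟨a, ha⟩ := linear_isometry_complex (e.toRealLinearIsometryEquivOfMapZero hzero)
  exact ⟨a, ha.imp (congrArg DFunLike.coe) (congrArg DFunLike.coe)⟩

end ColorSymmetry

section Lattice

variable {u v w : ℂ}

theorem mapsTo_closure_pair_iff {A : Type*} [AddGroup A] (f : A →+ A) (x y : A) :
    MapsTo f (AddSubgroup.closure {x, y}) (AddSubgroup.closure {x, y}) ↔
      f x ∈ AddSubgroup.closure {x, y} ∧ f y ∈ AddSubgroup.closure {x, y} := by
  change AddSubgroup.closure {x, y} ≤ (AddSubgroup.closure {x, y}).comap f ↔ _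
  rw [AddSubgroup.closure_le, pair_subset_iff]
  rfl

theorem im_mul_conj_mul_eq (u v w : ℂ) :
    ((u * conj v).im : ℂ) * w = (w * conj v).im * u - (w * conj u).im * v := by
  apply Complex.ext <;> simp <;> ring

theorem im_mul_conj_ne_zero_of_linearIndependent (h : LinearIndependent ℝ ![u, v]) :
    (u * conj v).im ≠ 0 := by
  intro him
  have hcramer := im_mul_conj_mul_eq u v (I * v)
  rw [him, ofReal_zero, zero_mul, sub_eq_add_neg, ← neg_mul, ← ofReal_neg, ← real_smul,
    ← real_smul, mul_assoc, mul_conj, I_mul_im, ofReal_re] at hcramer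
  have hv : normSq v = 0 := (LinearIndependent.pair_iff.1 h _ _ hcramer.symm).1
  exact h.ne_zero 1 (normSq_eq_zero.1 hv)

theorem mem_closure_pair_iff_dvd {t : ℝ} {p c d : ℤ} (huv : (u * conj v).im ≠ 0)
    (hp : (u * conj v).im = p * t) (hc : (w * conj v).im = c * t)
    (hd : (w * conj u).im = d * t) :
    w ∈ AddSubgroup.closure {u, v} ↔ p ∣ c ∧ p ∣ d := by
  have ht : t ≠ 0 := right_ne_zero_of_mul (hp ▸ huv)
  rw [AddSubgroup.mem_closure_pair]
  constructor
  · rintro ⟨m, n, rfl⟩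
    have him_v : ((m • u + n • v) * conj v).im = m * (u * conj v).im := by simp; ring
    have him_u : ((m • u + n • v) * conj u).im = -n * (u * conj v).im := by simp; ring
    have hcm : (c : ℝ) = p * m := mul_right_cancel₀ ht (by rw [← hc, him_v, hp]; ring)
    have hdn : (d : ℝ) = p * -n := mul_right_cancel₀ ht (by rw [← hd, him_u, hp]; ring)
    exact ⟨⟨m, mod_cast hcm⟩, ⟨-n, mod_cast hdn⟩⟩
  · rintro ⟨⟨m, rfl⟩, ⟨n, rfl⟩⟩
    refine ⟨m, -n, mul_left_cancel₀ (ofReal_ne_zero.2 huv) ?_⟩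
    rw [im_mul_conj_mul_eq u v w, hc, hd, hp]
    push_cast [zsmul_eq_mul]
    ring

theorem mapsTo_conj_closure_pair_iff_dvd {t : ℝ} {p q r s : ℤ} (huv : (u * conj v).im ≠ 0)
    (hp : (u * conj v).im = p * t) (hq : (u ^ 2).im = q * t) (hr : (v ^ 2).im = r * t)
    (hs : (u * v).im = s * t) :
    MapsTo conj (AddSubgroup.closure {u, v} : Set ℂ) (AddSubgroup.closure {u, v}) ↔
      p ∣ q ∧ p ∣ r ∧ p ∣ s := by
  have him_conj (x y : ℂ) : (conj x * conj y).im = -(x * y).im := by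
    rw [← map_mul, conj_im]
  have hu : conj u ∈ AddSubgroup.closure {u, v} ↔ p ∣ -s ∧ p ∣ -q :=
    mem_closure_pair_iff_dvd huv hp (by simp [him_conj, hs]) (by rw [him_conj, ← sq, hq]; simp)
  have hv : conj v ∈ AddSubgroup.closure {u, v} ↔ p ∣ -r ∧ p ∣ -s :=
    mem_closure_pair_iff_dvd huv hp (by rw [him_conj, ← sq, hr]; simp)
      (by simp [him_conj, mul_comm v, hs])
  refine (mapsTo_closure_pair_iff (conj : ℂ →+* ℂ).toAddMonoidHom u v).trans
    ((and_congr hu hv).trans ?_)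
  simp only [dvd_neg]
  tauto

end Lattice

section Eisenstein

theorem sq_eq_of_isPrimitiveRoot_three {R : Type*} [CommRing R] [IsDomain R] {ζ : R}
    (hζ : IsPrimitiveRoot ζ 3) : ζ ^ 2 = -1 - ζ := by
  have hsum := hζ.geom_sum_eq_zero (by norm_num)
  simp only [Finset.sum_range_succ, Finset.sum_range_zero] at hsum
  linear_combination hsum

variable {ξ : ℂ} (hξ : IsPrimitiveRoot ξ 3)
include hξ

theorem conj_eq_of_isPrimitiveRoot_three : conj ξ = -1 - ξ := by
  rw [← inv_eq_conj (hξ.norm'_eq_one three_ne_zero), ← sq_eq_of_isPrimitiveRoot_three hξ]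
  exact inv_eq_of_mul_eq_one_right (by rw [← pow_succ', hξ.pow_eq_one])

theorem normSq_add_mul_of_isPrimitiveRoot_three (m n : ℝ) :
    normSq (m + n * ξ) = m ^ 2 - m * n + n ^ 2 := by
  rw [← ofReal_inj, ← mul_conj]
  simp only [map_add, map_mul, conj_ofReal, conj_eq_of_isPrimitiveRoot_three hξ]
  push_cast
  linear_combination -(n : ℂ) ^ 2 * sq_eq_of_isPrimitiveRoot_three hξ

theorem mapsTo_conj_closure_one_pair :
    MapsTo conj (AddSubgroup.closure {1, ξ} : Set ℂ) (AddSubgroup.closure {1, ξ}) := by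
  have hone : 1 ∈ AddSubgroup.closure {1, ξ} := AddSubgroup.subset_closure (by simp)
  have hgen : ξ ∈ AddSubgroup.closure {1, ξ} := AddSubgroup.subset_closure (by simp)
  refine (mapsTo_closure_pair_iff (conj : ℂ →+* ℂ).toAddMonoidHom 1 ξ).2 ⟨?_, ?_⟩
  · simpa using hone
  · change conj ξ ∈ _
    rw [conj_eq_of_isPrimitiveRoot_three hξ]
    exact sub_mem (neg_mem hone) hgen

theorem sq_eq_one_or_exists_pow_eq_of_norm_eq_one {a : ℂ}
    (ha : a ∈ AddSubgroup.closure {1, ξ}) (hnorm : ‖a‖ = 1) :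
    a ^ 2 = 1 ∨ ∃ k : ℕ, a ^ k = ξ := by
  obtain ⟨m, n, rfl⟩ := AddSubgroup.mem_closure_pair.1 ha
  have hform : m ^ 2 - m * n + n ^ 2 = 1 := by
    have hnormSq : normSq (m + n * ξ) = 1 := by
      rw [normSq_eq_norm_sq, ← one_pow 2, ← hnorm]
      simp
    exact_mod_cast (normSq_add_mul_of_isPrimitiveRoot_three hξ m n).symm.trans hnormSq
  have hcases : n = 0 ∨ m = 0 ∨ m = n := by
    have hm : |m| ≤ 1 := abs_le_one_iff_mul_self_le_one.2 (by nlinarith [sq_nonneg (2 * n - m)])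
    have hn : |n| ≤ 1 := abs_le_one_iff_mul_self_le_one.2 (by nlinarith [sq_nonneg (2 * m - n)])
    rw [abs_le] at hm hn
    obtain ⟨_, _⟩ := hm
    obtain ⟨_, _⟩ := hn
    interval_cases m <;> interval_cases n <;> simp_all
  rcases hcases with rfl | rfl | rfl
  · left
    have hm : (m : ℂ) ^ 2 = 1 := by exact_mod_cast (by simpa using hform : m ^ 2 = 1)
    simpa using hm
  · refine .inr ⟨4, ?_⟩
    have hn : (n : ℂ) ^ 2 = 1 := by exact_mod_cast (by simpa using hform : n ^ 2 = 1)
    calc (0 • 1 + n • ξ) ^ 4 = ((n : ℂ) ^ 2) ^ 2 * (ξ ^ 3 * ξ) := by simp; ring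
      _ = ξ := by rw [hn, hξ.pow_eq_one]; ring
  · refine .inr ⟨2, ?_⟩
    have hm : (m : ℂ) ^ 2 = 1 := by exact_mod_cast (by linarith : m ^ 2 = 1)
    calc (m • 1 + m • ξ) ^ 2 = (m : ℂ) ^ 2 * (1 + ξ) ^ 2 := by simp; ring
      _ = ξ := by rw [hm]; linear_combination sq_eq_of_isPrimitiveRoot_three hξ

theorem mapsTo_mul_closure_pair_iff_dvd {u v : ℂ} {p₁ p₂ nu nv : ℤ}
    (huv : (u * conj v).im ≠ 0) (hp : u * conj v = p₁ + p₂ * ξ) (hnu : u * conj u = nu)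
    (hnv : v * conj v = nv) :
    MapsTo (ξ * ·) (AddSubgroup.closure {u, v} : Set ℂ) (AddSubgroup.closure {u, v}) ↔
      p₂ ∣ nu ∧ p₂ ∣ nv ∧ p₂ ∣ p₁ := by
  have hsq := sq_eq_of_isPrimitiveRoot_three hξ
  have hconj := conj_eq_of_isPrimitiveRoot_three hξ
  have him (x y : ℤ) : ((x : ℂ) + y * ξ).im = y * ξ.im := by simp
  have hp' : v * conj u = p₁ + p₂ * conj ξ := by simpa [mul_comm] using congrArg conj hp
  have huv_im : (u * conj v).im = p₂ * ξ.im := by rw [hp, him]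
  have hu : ξ * u ∈ AddSubgroup.closure {u, v} ↔ p₂ ∣ p₁ - p₂ ∧ p₂ ∣ nu := by
    refine mem_closure_pair_iff_dvd huv huv_im ?_ ?_
    · rw [← him (-p₂)]
      congr 1
      push_cast
      linear_combination ξ * hp + p₂ * hsq
    · rw [mul_assoc, hnu, ← him 0]
      congr 1
      push_cast
      ring
  have hv : ξ * v ∈ AddSubgroup.closure {u, v} ↔ p₂ ∣ nv ∧ p₂ ∣ p₁ := by
    refine mem_closure_pair_iff_dvd huv huv_im ?_ ?_
    · rw [mul_assoc, hnv, ← him 0]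
      congr 1
      push_cast
      ring
    · rw [← him p₂]
      congr 1
      linear_combination ξ * hp' + p₂ * ξ * hconj - p₂ * hsq
  refine (mapsTo_closure_pair_iff (AddMonoidHom.mulLeft ξ) u v).trans
    ((and_congr hu hv).trans ?_)
  rw [dvd_sub_self_right]
  tauto

variable {Γ : AddSubgroup ℂ}

theorem eq_one_or_eq_neg_one_of_mul_mem_pointColorGroup (hle : Γ ≤ AddSubgroup.closure {1, ξ})
    (hmul : ¬ MapsTo (ξ * ·) (Γ : Set ℂ) Γ) {a : Circle}
    (ha : (fun z ↦ (a : ℂ) * z) ∈ pointColorGroup (AddSubgroup.closure {1, ξ}) Γ) :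
    (a : ℂ) = 1 ∨ (a : ℂ) = -1 := by
  obtain ⟨himage₁, himage₂⟩ := (coe_mem_pointColorGroup_iff hle (rotation a)).1 ha
  have ha_mem : (a : ℂ) ∈ AddSubgroup.closure {1, ξ} := by
    have hone : (1 : ℂ) ∈ AddSubgroup.closure {1, ξ} := AddSubgroup.subset_closure (by simp)
    simpa using himage₁.subset (mem_image_of_mem _ hone)
  have hmaps : MapsTo ((a : ℂ) * ·) (Γ : Set ℂ) Γ := mapsTo_iff_image_subset.2 himage₂.subset
  rcases sq_eq_one_or_exists_pow_eq_of_norm_eq_one hξ ha_mem a.norm_coe with hsq | ⟨k, hk⟩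
  · exact sq_eq_one_iff.1 hsq
  · have hiter := hmaps.iterate k
    rw [mul_left_iterate, hk] at hiter
    exact absurd hiter hmul

theorem pointColorGroup_eq_of_mapsTo_conj (hle : Γ ≤ AddSubgroup.closure {1, ξ})
    (hconj : MapsTo conj (Γ : Set ℂ) Γ) (hmul : ¬ MapsTo (ξ * ·) (Γ : Set ℂ) Γ) :
    pointColorGroup (AddSubgroup.closure {1, ξ}) Γ =
      {fun z ↦ z, fun z ↦ -z, fun z ↦ conj z, fun z ↦ -conj z} := by
  have hconj_mem : (fun z ↦ conj z) ∈ pointColorGroup (AddSubgroup.closure {1, ξ}) Γ :=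
    coe_mem_pointColorGroup_of_involutive hle (e := conjLIE) conj_conj
      (mapsTo_conj_closure_one_pair hξ) hconj
  refine Subset.antisymm (fun g hg ↦ ?_) ?_
  · obtain ⟨a, rfl | rfl⟩ := exists_circle_of_mem_pointColorGroup hg
    · rcases eq_one_or_eq_neg_one_of_mul_mem_pointColorGroup hξ hle hmul hg with ha | ha <;>
        simp [ha]
    · have hrot : (fun z ↦ (a : ℂ) * z) ∈ pointColorGroup (AddSubgroup.closure {1, ξ}) Γ := by
        simpa [Function.comp_def] using comp_mem_pointColorGroup hg hconj_mem
      rcases eq_one_or_eq_neg_one_of_mul_mem_pointColorGroup hξ hle hmul hrot with ha | ha <;>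
        simp [ha]
  · rintro g (rfl | rfl | rfl | rfl)
    · exact id_mem_pointColorGroup hle
    · exact neg_mem_pointColorGroup hle
    · exact hconj_mem
    · exact comp_mem_pointColorGroup (neg_mem_pointColorGroup hle) hconj_mem

theorem pointColorGroup_cmm_c_general {u v : ℂ} (hu : u ∈ AddSubgroup.closure {1, ξ})
    (hv : v ∈ AddSubgroup.closure {1, ξ}) (hind : LinearIndependent ℝ ![u, v])
    {p₁ p₂ nu nv q₁ q₂ r₁ r₂ s₁ s₂ : ℤ} (hp : u * conj v = p₁ + p₂ * ξ)
    (hnu : u * conj u = nu) (hnv : v * conj v = nv) (hq : u ^ 2 = q₁ + q₂ * ξ)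
    (hr : v ^ 2 = r₁ + r₂ * ξ) (hs : u * v = s₁ + s₂ * ξ)
    (hdvd : p₂ ∣ q₂ ∧ p₂ ∣ r₂ ∧ p₂ ∣ s₂) (hndvd : ¬ (p₂ ∣ nu ∧ p₂ ∣ nv ∧ p₂ ∣ p₁)) :
    pointColorGroup (AddSubgroup.closure {1, ξ}) (AddSubgroup.closure {u, v}) =
      {fun z ↦ z, fun z ↦ -z, fun z ↦ conj z, fun z ↦ -conj z} := by
  have hle : AddSubgroup.closure {u, v} ≤ AddSubgroup.closure {1, ξ} :=
    (AddSubgroup.closure_le _).2 (pair_subset hu hv)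
  have huv := im_mul_conj_ne_zero_of_linearIndependent hind
  have him (x y : ℤ) : ((x : ℂ) + y * ξ).im = y * ξ.im := by simp
  refine pointColorGroup_eq_of_mapsTo_conj hξ hle ?_ ?_
  · exact (mapsTo_conj_closure_pair_iff_dvd huv (by rw [hp, him]) (by rw [hq, him])
      (by rw [hr, him]) (by rw [hs, him])).2 hdvd
  · rwa [mapsTo_mul_closure_pair_iff_dvd hξ huv hp hnu hnv]

end Eisenstein

/-- Case (c) for the hexagonal lattice `Γ₁ = ℤ[ξ]`, `ξ = e^{2πi/3}`: if
`Im_h(u·conj v)` divides all of `Im_h(u²)`, `Im_h(v²)`, `Im_h(uv)` but none of `N(u)`,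
`N(v)`, `Re_h(u·conj v)`, then the point group of the color group of the coloring of
`Γ₁` determined by `Γ₂ = ⟨u, v⟩_ℤ` has order `4`, consisting of the identity, the
`180°`-rotation, and a pair `{s, -s}` of reflections from the point group of `ℤ[ξ]`
(type `cmm`); in particular complex conjugation is a color symmetry. -/
theorem pointColorGroup_cmm_c (ξ ζ : ℂ)
    (hξ : ξ = Complex.exp (2 * (Real.pi : ℂ) * I / 3))
    (hζ : ζ = Complex.exp ((Real.pi : ℂ) * I / 3))
    (u v : ℂ) (a₁ a₂ b₁ b₂ : ℤ)
    (hu : u = a₁ + a₂ * ξ) (hv : v = b₁ + b₂ * ξ)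
    (hind : LinearIndependent ℝ ![u, v])
    (Γ₁ Γ₂ : AddSubgroup ℂ)
    (hΓ₁ : Γ₁ = AddSubgroup.closure ({1, ξ} : Set ℂ))
    (hΓ₂ : Γ₂ = AddSubgroup.closure ({u, v} : Set ℂ))
    (p₁ p₂ nu nv q₁ q₂ r₁ r₂ s₁ s₂ : ℤ)
    (hp : u * starRingEnd ℂ v = p₁ + p₂ * ξ)
    (hnu : u * starRingEnd ℂ u = (nu : ℂ))
    (hnv : v * starRingEnd ℂ v = (nv : ℂ))
    (hq : u ^ 2 = q₁ + q₂ * ξ)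
    (hr : v ^ 2 = r₁ + r₂ * ξ)
    (hs : u * v = s₁ + s₂ * ξ)
    (hdvd : p₂ ∣ q₂ ∧ p₂ ∣ r₂ ∧ p₂ ∣ s₂)
    (hndvd : ¬ p₂ ∣ nu ∧ ¬ p₂ ∣ nv ∧ ¬ p₂ ∣ p₁) :
    (fun z => starRingEnd ℂ z) ∈ pointColorGroup Γ₁ Γ₂ ∧
      ∃ k : Fin 6, pointColorGroup Γ₁ Γ₂ =
      {fun z => z, fun z => -z, fun z => ζ ^ (k : ℕ) * starRingEnd ℂ z,
        fun z => -(ζ ^ (k : ℕ) * starRingEnd ℂ z)} := by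
  have hroot : IsPrimitiveRoot ξ 3 := by simpa [hξ] using isPrimitiveRoot_exp 3 three_ne_zero
  have hmem (x y : ℤ) : (x + y * ξ : ℂ) ∈ AddSubgroup.closure {1, ξ} :=
    AddSubgroup.mem_closure_pair.2 ⟨x, y, by simp⟩
  have hgroup := pointColorGroup_cmm_c_general hroot (hu ▸ hmem a₁ a₂) (hv ▸ hmem b₁ b₂) hind
    hp hnu hnv hq hr hs hdvd fun h ↦ hndvd.1 h.1
  rw [← hΓ₁, ← hΓ₂] at hgroup
  exact ⟨by simp [hgroup], 0, by simpa using hgroup⟩
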